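/- Let $(M,d)$ be a metric space, let $q : M \to [0,\infty)$, let $\lambda \in (0,1)$ and let $k \ge 1$ be an integer. For a finite set $S \subseteq M$ put $Q(S) = \sum_{u \in S} q(u)$, $D(S) = \sum_{(u,v) \in S \times S,\ u \ne v} d(u,v)$ (sum over ordered pairs) and $F(S) = \lambda\, Q(S) + (1-\lambda)\, D(S)$. For a finite $T \subseteq M$ with $|T| \ge k$, let $\mathrm{opt}(T \mid k)$ denote a subset of $T$ of cardinality $k$ maximizing $F$ among all such subsets. A greedy selection of $k$ items from $T$ is a set $\{z_1,\dots,z_k\}$ of distinct elements of $T$ such that $z_1$ maximizes $q$ over $T$ and, for $i = 2,\dots,k$, $z_i$ maximizes $\lambda\, q(t) + (1-\lambda)\sum_{j<i} d(t,z_j)$ over $t \in T \setminus \{z_1,\dots,z_{i-1}\}$. Let a finite set $U \subseteq M$ be partitioned into disjoint parts $U_1,\dots,U_l$, each of cardinality at least $k$. For each $i$ let $S_i$ be a greedy selection of $k$ items from $U_i$, and let $O = \mathrm{opt}(U \mid k)$. Then $$\lambda\, Q(O) \;\le\; 2\, F\bigl(\mathrm{opt}(S_1 \cup \dots \cup S_l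 \mid k)\bigr).$$ -/

import Mathlib

/-- Total quality `Q(S)`. -/
noncomputable def Qsum {M : Type*} (q : M → ℝ) (S : Finset M) : ℝ := ∑ u ∈ S, q u

/-- Diversity `D(S)`: the sum of distances over ordered pairs of distinct elements. -/
noncomputable def Dsum {M : Type*} [MetricSpace M] [DecidableEq M] (S : Finset M) : ℝ :=
  ∑ p ∈ S.offDiag, dist p.1 p.2

/-- The objective `F(S) = lam * Q(S) + (1 - lam) * D(S)`. -/
noncomputable def Fobj {M : Type*} [MetricSpace M] [DecidableEq M]
    (q : M → ℝ) (lam : ℝ) (S : Finset M) : ℝ :=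
  lam * Qsum q S + (1 - lam) * Dsum S

/-- `O` is a subset of `T` of cardinality `k` maximizing `F`. -/
def IsOptSubset {M : Type*} [MetricSpace M] [DecidableEq M] (q : M → ℝ) (lam : ℝ)
    (T : Finset M) (k : ℕ) (O : Finset M) : Prop :=
  O ⊆ T ∧ O.card = k ∧ ∀ B ⊆ T, B.card = k → Fobj q lam B ≤ Fobj q lam O

/-- `z 0, …, z (k - 1)` is a run of greedy selection of `k` items from `T`: the first item
maximizes `q` over `T`; every later item maximizes
`lam * q t + (1 - lam) * ∑ j < i, dist t (z j)` over the items `t` not selected so far. -/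
def IsGreedyRun {M : Type*} [MetricSpace M] (q : M → ℝ) (lam : ℝ)
    (T : Finset M) (k : ℕ) (z : Fin k → M) : Prop :=
  Function.Injective z ∧ (∀ i, z i ∈ T) ∧
  (∀ i : Fin k, i.val = 0 → ∀ t ∈ T, q t ≤ q (z i)) ∧
  ∀ i : Fin k, 0 < i.val → ∀ t ∈ T, (∀ j < i, t ≠ z j) →
    lam * q t + (1 - lam) * ∑ j ∈ Finset.univ.filter (fun j => j < i), dist t (z j) ≤
      lam * q (z i) + (1 - lam) * ∑ j ∈ Finset.univ.filter (fun j => j < i), dist (z i) (z j)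

/-- `S` is a possible output of greedy selection of `k` items from `T`
(ties may be broken arbitrarily). -/
def IsGreedySelection {M : Type*} [MetricSpace M] [DecidableEq M] (q : M → ℝ) (lam : ℝ)
    (T : Finset M) (k : ℕ) (S : Finset M) : Prop :=
  ∃ z : Fin k → M, IsGreedyRun q lam T k z ∧ S = Finset.univ.image z

/-!
Let `t` be an item of `O` of maximal quality among those that no greedy selection retained, say
`t ∈ Upart i`. Greedy preferred each of its selections from `Upart i` to `t`, so each of these,
together with the items selected before it, contributes at least `lam * q t` to the objective. Hence
filling up the retained items of `O` with an initial segment of the greedy run on `Upart i` replaces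
every rejected item by one that contributes at least as much. The resulting set `B`, of the same
size as `O`, satisfies `lam * Q(O) ≤ F(B)`.
-/

section Finset

variable {ι α β : Type*}

theorem sum_le_sum_of_card_eq_of_forall_le {R : Type*} [AddCommMonoid R] [PartialOrder R]
    [IsOrderedAddMonoid R] {s : Finset α} {t : Finset β} {f : α → R} {g : β → R}
    (hcard : s.card = t.card) (h : ∀ a ∈ s, ∀ b ∈ t, f a ≤ g b) :
    ∑ a ∈ s, f a ≤ ∑ b ∈ t, g b := by
  rw [← Finset.sum_coe_sort s, ← Finset.sum_coe_sort t,
    ← (Finset.equivOfCardEq hcard).sum_comp fun b : t => g b]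
  exact Finset.sum_le_sum fun a _ => h _ a.2 _ (Subtype.prop _)

/- Adding the elements of `J` to `I` in increasing order increases the cardinality by at most one at
each step, so no intermediate value is skipped. -/
theorem exists_initial_segment_card_union_image_eq [LinearOrder ι] [DecidableEq α] (z : ι → α)
    {C : Finset α} {n : ℕ} (hC : C.card ≤ n) {J : Finset ι} (hJ : n ≤ (C ∪ J.image z).card) :
    ∃ I ⊆ J, (∀ i ∈ I, ∀ j ∈ J, j < i → j ∈ I) ∧ (C ∪ I.image z).card = n := by
  induction J using Finset.induction_on_max with
  | empty => exact ⟨∅, subset_rfl, by simp, hJ.antisymm' (by simpa using hC)⟩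
  | insert a J ha ih =>
    rcases le_or_gt n (C ∪ J.image z).card with hn | hn
    · obtain ⟨I, hIJ, hI, hcard⟩ := ih hn
      refine ⟨I, hIJ.trans (Finset.subset_insert a J), fun i hi j hj hji => ?_, hcard⟩
      have hja : j ≠ a := (hji.trans (ha i (hIJ hi))).ne
      exact hI i hi j (Finset.mem_of_mem_insert_of_ne hj hja) hji
    · have hsucc : (C ∪ (insert a J).image z).card ≤ (C ∪ J.image z).card + 1 := by
        rw [Finset.image_insert, Finset.union_insert]
        exact Finset.card_insert_le _ _
      exact ⟨insert a J, subset_rfl, fun _ _ _ hj _ => hj, hJ.antisymm' (hsucc.trans hn)⟩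

end Finset

section Objective

variable {M : Type*} [MetricSpace M] {q : M → ℝ} {lam : ℝ}

/-- The contribution of the item `u` to the objective of `B`. For `u ∈ B`, the distance between `u`
and `v` is shared out between the two ordered pairs `(u, v)` and `(v, u)`, so that the contributions
of the elements of `B` add up to `F(B)`. -/
noncomputable def contribution (q : M → ℝ) (lam : ℝ) (B : Finset M) (u : M) : ℝ :=
  lam * q u + (1 - lam) * ∑ v ∈ B, dist u v

theorem mul_quality_le_contribution_self (h1 : lam ≤ 1) (B : Finset M) (u : M) :
    lam * q u ≤ contribution q lam B u :=
  le_add_of_nonneg_right <|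
    mul_nonneg (sub_nonneg.2 h1) (Finset.sum_nonneg fun _ _ => dist_nonneg)

theorem IsGreedyRun.mul_quality_le_contribution (h0 : 0 ≤ lam) (h1 : lam ≤ 1) {T : Finset M}
    {k : ℕ} {z : Fin k → M} (hz : IsGreedyRun q lam T k z) {t : M} (ht : t ∈ T) {i : Fin k}
    (hti : ∀ j < i, t ≠ z j) {B : Finset M} (hB : ∀ j < i, z j ∈ B) :
    lam * q t ≤ contribution q lam B (z i) := by
  classical
  obtain ⟨hinj, -, hfirst, hstep⟩ := hz
  have h1' : 0 ≤ 1 - lam := sub_nonneg.2 h1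
  rcases Nat.eq_zero_or_pos i.val with hi | hi
  · calc lam * q t ≤ lam * q (z i) := mul_le_mul_of_nonneg_left (hfirst i hi t ht) h0
      _ ≤ contribution q lam B (z i) := mul_quality_le_contribution_self h1 B (z i)
  · let earlier : Finset (Fin k) := Finset.univ.filter (· < i)
    have hsub : earlier.image z ⊆ B :=
      Finset.image_subset_iff.2 fun j hj => hB j (Finset.mem_filter.1 hj).2
    have hdist : ∑ j ∈ earlier, dist (z i) (z j) ≤ ∑ v ∈ B, dist (z i) v := by
      rw [← Finset.sum_image (f := dist (z i)) hinj.injOn]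
      exact Finset.sum_le_sum_of_subset_of_nonneg hsub fun _ _ _ => dist_nonneg
    calc lam * q t
        ≤ lam * q t + (1 - lam) * ∑ j ∈ earlier, dist t (z j) :=
          le_add_of_nonneg_right (mul_nonneg h1' (Finset.sum_nonneg fun _ _ => dist_nonneg))
      _ ≤ lam * q (z i) + (1 - lam) * ∑ j ∈ earlier, dist (z i) (z j) := hstep i hi t ht hti
      _ ≤ contribution q lam B (z i) := by unfold contribution; gcongr

variable [DecidableEq M]

theorem Dsum_eq_sum_sum (B : Finset M) : Dsum B = ∑ u ∈ B, ∑ v ∈ B, dist u v := by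
  have hdiag : ∑ p ∈ B.diag, dist p.1 p.2 = 0 := by simp [Finset.sum_diag]
  rw [← Finset.sum_product', ← Finset.diag_union_offDiag,
    Finset.sum_union (Finset.disjoint_diag_offDiag B), hdiag, zero_add, Dsum]

theorem Fobj_eq_sum_contribution (q : M → ℝ) (lam : ℝ) (B : Finset M) :
    Fobj q lam B = ∑ u ∈ B, contribution q lam B u := by
  simp only [Fobj, Qsum, Dsum_eq_sum_sum, contribution, Finset.sum_add_distrib, Finset.mul_sum]

theorem Fobj_nonneg (hq : ∀ u, 0 ≤ q u) (h0 : 0 ≤ lam) (h1 : lam ≤ 1) (B : Finset M) :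
    0 ≤ Fobj q lam B := by
  rw [Fobj_eq_sum_contribution]
  exact Finset.sum_nonneg fun u _ =>
    (mul_nonneg h0 (hq u)).trans (mul_quality_le_contribution_self h1 B u)

theorem mul_Qsum_le_Fobj_of_forall_sdiff (h1 : lam ≤ 1) {A B : Finset M} (hcard : A.card = B.card)
    (h : ∀ t ∈ A \ B, ∀ u ∈ B \ A, lam * q t ≤ contribution q lam B u) :
    lam * Qsum q A ≤ Fobj q lam B := by
  rw [Fobj_eq_sum_contribution, Qsum, Finset.mul_sum, ← Finset.sum_inter_add_sum_sdiff A B,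
    ← Finset.sum_inter_add_sum_sdiff B A, Finset.inter_comm B A]
  exact add_le_add (Finset.sum_le_sum fun u _ => mul_quality_le_contribution_self h1 B u)
    (sum_le_sum_of_card_eq_of_forall_le (Finset.card_sdiff_comm hcard) h)

theorem IsGreedySelection.exists_extension (h0 : 0 ≤ lam) (h1 : lam ≤ 1) {T S : Finset M} {k : ℕ}
    (hS : IsGreedySelection q lam T k S) {t : M} (htT : t ∈ T) (htS : t ∉ S) {C : Finset M}
    {n : ℕ} (hC : C.card ≤ n) (hn : n ≤ k) :
    ∃ B, C ⊆ B ∧ B ⊆ C ∪ S ∧ B.card = n ∧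
      ∀ u ∈ B \ C, lam * q t ≤ contribution q lam B u := by
  obtain ⟨z, hz, rfl⟩ := hS
  have hk : k ≤ (C ∪ Finset.univ.image z).card := by
    calc k = (Finset.univ.image z).card := by
          rw [Finset.card_image_of_injective _ hz.1, Finset.card_fin]
      _ ≤ (C ∪ Finset.univ.image z).card := Finset.card_le_card Finset.subset_union_right
  obtain ⟨I, -, hI, hcard⟩ := exists_initial_segment_card_union_image_eq z hC (hn.trans hk)
  refine ⟨C ∪ I.image z, Finset.subset_union_left,
    Finset.union_subset_union_right (Finset.image_subset_image I.subset_univ), hcard,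
    fun u hu => ?_⟩
  obtain ⟨huB, huC⟩ := Finset.mem_sdiff.1 hu
  obtain ⟨i, hi, rfl⟩ := Finset.mem_image.1 ((Finset.mem_union.1 huB).resolve_left huC)
  refine hz.mul_quality_le_contribution h0 h1 htT (fun j _ htj => ?_) fun j hj => ?_
  · exact htS (htj ▸ Finset.mem_image_of_mem z (Finset.mem_univ j))
  · exact Finset.mem_union_right C (Finset.mem_image_of_mem z (hI i hi j (Finset.mem_univ j) hj))

theorem exists_subset_biUnion_mul_Qsum_le_Fobj {ι : Type*} (h0 : 0 ≤ lam) (h1 : lam ≤ 1)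
    {s : Finset ι} {T S : ι → Finset M} {k : ℕ}
    (hS : ∀ i ∈ s, IsGreedySelection q lam (T i) k (S i)) {O : Finset M}
    (hOT : O ⊆ s.biUnion T) (hOk : O.card ≤ k) :
    ∃ B ⊆ s.biUnion S, B.card = O.card ∧ lam * Qsum q O ≤ Fobj q lam B := by
  rcases (O \ s.biUnion S).eq_empty_or_nonempty with hempty | hne
  · exact ⟨O, Finset.sdiff_eq_empty_iff_subset.1 hempty, rfl,
      mul_Qsum_le_Fobj_of_forall_sdiff h1 rfl (by simp)⟩
  obtain ⟨t, ht, htmax⟩ := Finset.exists_max_image _ q hne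
  obtain ⟨htO, htS⟩ := Finset.mem_sdiff.1 ht
  obtain ⟨i, his, hti⟩ := Finset.mem_biUnion.1 (hOT htO)
  have hSi : S i ⊆ s.biUnion S := Finset.subset_biUnion_of_mem S his
  obtain ⟨B, hCB, hBC, hcard, hB⟩ := (hS i his).exists_extension h0 h1 hti (fun h => htS (hSi h))
    (Finset.card_le_card (Finset.inter_subset_left : O ∩ s.biUnion S ⊆ O)) hOk
  refine ⟨B, hBC.trans (Finset.union_subset Finset.inter_subset_right hSi), hcard,
    mul_Qsum_le_Fobj_of_forall_sdiff h1 hcard.symm fun a ha u hu => ?_⟩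
  obtain ⟨haO, haB⟩ := Finset.mem_sdiff.1 ha
  obtain ⟨huB, huO⟩ := Finset.mem_sdiff.1 hu
  have ha_rejected : a ∈ O \ s.biUnion S :=
    Finset.mem_sdiff.2 ⟨haO, fun haS => haB (hCB (Finset.mem_inter.2 ⟨haO, haS⟩))⟩
  calc lam * q a ≤ lam * q t := mul_le_mul_of_nonneg_left (htmax a ha_rejected) h0
    _ ≤ contribution q lam B u :=
      hB u (Finset.mem_sdiff.2 ⟨huB, fun huC => huO (Finset.mem_inter.1 huC).1⟩)

theorem stmt_6_general {ι : Type*} (h0 : 0 ≤ lam) (h1 : lam ≤ 1) {s : Finset ι}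
    {T S : ι → Finset M} {k : ℕ} (hS : ∀ i ∈ s, IsGreedySelection q lam (T i) k (S i))
    {O : Finset M} (hOT : O ⊆ s.biUnion T) (hOk : O.card ≤ k)
    {P : Finset M} (hP : IsOptSubset q lam (s.biUnion S) O.card P) :
    lam * Qsum q O ≤ Fobj q lam P := by
  obtain ⟨B, hBS, hBcard, hOB⟩ := exists_subset_biUnion_mul_Qsum_le_Fobj h0 h1 hS hOT hOk
  exact hOB.trans (hP.2.2 B hBS hBcard)

end Objective

theorem stmt_6 {M : Type*} [MetricSpace M] [DecidableEq M]
    (q : M → ℝ) (hq : ∀ u, 0 ≤ q u)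
    (lam : ℝ) (hlam0 : 0 < lam) (hlam1 : lam < 1)
    (k l : ℕ) (hk : 1 ≤ k)
    (U : Finset M) (Upart : Fin l → Finset M)
    (hU : U = Finset.univ.biUnion Upart)
    (hdisj : ∀ i j, i ≠ j → Disjoint (Upart i) (Upart j))
    (hcard : ∀ i, k ≤ (Upart i).card)
    (S : Fin l → Finset M)
    (hS : ∀ i, IsGreedySelection q lam (Upart i) k (S i))
    (O : Finset M) (hO : IsOptSubset q lam U k O)
    (P : Finset M) (hP : IsOptSubset q lam (Finset.univ.biUnion S) k P) :
    lam * Qsum q O ≤ 2 * Fobj q lam P := by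
  obtain ⟨hOU, rfl, -⟩ := hO
  linarith [stmt_6_general hlam0.le hlam1.le (fun i _ => hS i) (hU ▸ hOU) le_rfl hP,
    Fobj_nonneg hq hlam0.le hlam1.le P]
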